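/- Every recursive schedule is NDoT-optimal and MDT-optimal: if L is recursive, then for every listening schedule L' and every t ∈ ℕ, Σ_{κ ∈ K_BC discovered by L at some slot ≤ t} P_κ ≥ Σ_{κ ∈ K_BC discovered by L' at some slot ≤ t} P_κ, and consequently L minimizes MDT among all complete schedules. -/

import Mathlib

open scoped Classical

/-- A listening schedule over channel set `C`: a set of (channel, time-slot) pairs
such that all scanned channels belong to `C` and at most one channel is scanned
per time slot. -/
def IsSchedule (C : Finset ℕ) (L : Set (ℕ × ℕ)) : Prop :=
  (∀ p ∈ L, p.1 ∈ C) ∧ ∀ c c' t : ℕ, (c, t) ∈ L → (c', t) ∈ L → c = c'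

/-- Configuration `(c, b, δ)` is discovered at time slot `t` by the schedule `L`. -/
def DiscoveredAt (L : Set (ℕ × ℕ)) (c b δ t : ℕ) : Prop :=
  (c, t) ∈ L ∧ t % b = δ

/-- The discovery time `T_κ(L)` of configuration `κ = (c, b, δ)`: the least time slot
at which it is discovered (junk value `0` if it is never discovered). -/
noncomputable def discTime (L : Set (ℕ × ℕ)) (c b δ : ℕ) : ℕ :=
  sInf {t | DiscoveredAt L c b δ t}

/-- A schedule is complete if every configuration in `K_BC` is discovered at some slot. -/
def Complete (C B : Finset ℕ) (L : Set (ℕ × ℕ)) : Prop :=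
  ∀ c ∈ C, ∀ b ∈ B, ∀ δ < b, ∃ t, DiscoveredAt L c b δ t

/-- The set of all configurations `K_BC`, as a finite set of triples `(c, b, δ)`. -/
def KBC (C B : Finset ℕ) : Finset (ℕ × ℕ × ℕ) :=
  (C ×ˢ B ×ˢ Finset.range (B.sup id)).filter fun κ => κ.2.2 < κ.2.1

/-- The weight `P_κ = 1/(b·|B|·|C|)` of a configuration with beacon period `b`. -/
noncomputable def weight (C B : Finset ℕ) (b : ℕ) : ℝ :=
  (1 : ℝ) / ((b : ℝ) * (B.card : ℝ) * (C.card : ℝ))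

/-- Total weight of configurations discovered by `L` at some slot `≤ t` (the NDoT curve). -/
noncomputable def discSum (C B : Finset ℕ) (L : Set (ℕ × ℕ)) (t : ℕ) : ℝ :=
  ∑ κ ∈ (KBC C B).filter (fun κ => ∃ t' ≤ t, DiscoveredAt L κ.1 κ.2.1 κ.2.2 t'),
    weight C B κ.2.1

/-- The mean discovery time `MDT(L) = Σ_{κ ∈ K_BC} P_κ · T_κ(L)`. -/
noncomputable def MDT (C B : Finset ℕ) (L : Set (ℕ × ℕ)) : ℝ :=
  ∑ κ ∈ KBC C B, weight C B κ.2.1 * (discTime L κ.1 κ.2.1 κ.2.2 : ℝ)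

/-- A schedule is recursive if it is complete and, for every `b ∈ B`, every
configuration with beacon period `b` has discovery time at most `b·|C| - 1`. -/
def Recursive (C B : Finset ℕ) (L : Set (ℕ × ℕ)) : Prop :=
  Complete C B L ∧
  ∀ c ∈ C, ∀ b ∈ B, ∀ δ < b, discTime L c b δ ≤ b * C.card - 1

/-- `D(c,t)`: the expected number of new discoveries when scanning channel `c` at slot `t`,
i.e. the sum of weights of configurations `(c, b, t mod b)`, `b ∈ B`, not yet
discovered by `L` before slot `t`. -/
noncomputable def gain (C B : Finset ℕ) (L : Set (ℕ × ℕ)) (c t : ℕ) : ℝ :=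
  ∑ b ∈ B.filter (fun b => ¬ ∃ t' < t, DiscoveredAt L c b (t % b) t'),
    weight C B b

/-- A schedule is greedy if, whenever some channel has positive expected gain at slot `t`,
it scans a channel maximizing the expected gain at slot `t`. -/
def Greedy (C B : Finset ℕ) (L : Set (ℕ × ℕ)) : Prop :=
  IsSchedule C L ∧
  ∀ t : ℕ, (∃ c ∈ C, 0 < gain C B L c t) →
    ∃ c ∈ C, (c, t) ∈ L ∧ ∀ c' ∈ C, gain C B L c' t ≤ gain C B L c t

/-!
Fix a beacon period `b`. A schedule scans one channel per slot, so distinct configurations of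
period `b` have distinct discovery times; hence at most `min (t + 1) (b * |C|)` of them are
discovered by slot `t`. For a recursive schedule, the `b * |C|` discovery times are distinct numbers
below `b * |C|`, so each of these slots is used exactly once and the bound is attained for all `b`
and `t` simultaneously. MDT-optimality follows because the mean of a discovery time is the sum over
`t` of the weight that is still undiscovered at slot `t`.
-/

section WeightedSum

variable {ι R : Type*} {s : Finset ι}

theorem sum_mul_natCast_eq_sum_range_sum_filter_lt [NonAssocSemiring R] (w : ι → R) {T : ι → ℕ}
    {M : ℕ} (hM : ∀ i ∈ s, T i ≤ M) :
    ∑ i ∈ s, w i * (T i : R) = ∑ t ∈ Finset.range M, ∑ i ∈ s with t < T i, w i := by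
  simp only [Finset.sum_filter]
  rw [Finset.sum_comm]
  refine Finset.sum_congr rfl fun i hi => ?_
  have range_filter_lt : {t ∈ Finset.range M | t < T i} = Finset.range (T i) := by
    ext t
    simpa using fun ht : t < T i => ht.trans_le (hM i hi)
  rw [← Finset.sum_filter, range_filter_lt, Finset.sum_const, Finset.card_range, nsmul_eq_mul,
    (Nat.cast_commute _ _).eq]

theorem sum_mul_natCast_le_of_sum_filter_le [Ring R] [PartialOrder R] [IsOrderedAddMonoid R]
    {w : ι → R} {T T' : ι → ℕ}
    (h : ∀ t, ∑ i ∈ s with T' i ≤ t, w i ≤ ∑ i ∈ s with T i ≤ t, w i) :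
    ∑ i ∈ s, w i * (T i : R) ≤ ∑ i ∈ s, w i * (T' i : R) := by
  have sum_lt_eq (S : ι → ℕ) (t : ℕ) :
      ∑ i ∈ s with t < S i, w i = ∑ i ∈ s, w i - ∑ i ∈ s with S i ≤ t, w i := by
    rw [eq_sub_iff_add_eq', ← Finset.sum_filter_add_sum_filter_not s (fun i => S i ≤ t)]
    simp only [not_le]
  rw [sum_mul_natCast_eq_sum_range_sum_filter_lt w (M := s.sup T ⊔ s.sup T')
      fun i hi => (Finset.le_sup hi).trans le_sup_left,
    sum_mul_natCast_eq_sum_range_sum_filter_lt w (M := s.sup T ⊔ s.sup T')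
      fun i hi => (Finset.le_sup hi).trans le_sup_right]
  refine Finset.sum_le_sum fun t _ => ?_
  rw [sum_lt_eq, sum_lt_eq]
  exact sub_le_sub_left (h t) _

end WeightedSum

section Schedules

variable {C B : Finset ℕ} {L L' : Set (ℕ × ℕ)} {b c t δ : ℕ}

theorem discoveredAt_discTime (h : ∃ t, DiscoveredAt L c b δ t) :
    DiscoveredAt L c b δ (discTime L c b δ) :=
  Nat.sInf_mem h

theorem exists_le_discoveredAt_iff (h : ∃ t, DiscoveredAt L c b δ t) :
    (∃ t' ≤ t, DiscoveredAt L c b δ t') ↔ discTime L c b δ ≤ t :=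
  ⟨fun ⟨_, hle, hdisc⟩ => (Nat.sInf_le hdisc).trans hle,
    fun hle => ⟨_, hle, discoveredAt_discTime h⟩⟩

theorem IsSchedule.injOn_discTime (hL : IsSchedule C L) (b : ℕ) :
    Set.InjOn (fun p : ℕ × ℕ => discTime L p.1 b p.2)
      {p | ∃ t, DiscoveredAt L p.1 b p.2 t} := by
  rintro ⟨c, δ⟩ hp ⟨c', δ'⟩ hp' (heq : discTime L c b δ = discTime L c' b δ')
  obtain ⟨hmem, hmod⟩ := discoveredAt_discTime hp
  obtain ⟨hmem', hmod'⟩ := discoveredAt_discTime hp'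
  rw [← heq] at hmem' hmod'
  exact Prod.ext (hL.2 _ _ _ hmem hmem') (hmod.symm.trans hmod')

theorem mem_KBC {κ : ℕ × ℕ × ℕ} : κ ∈ KBC C B ↔ κ.1 ∈ C ∧ κ.2.1 ∈ B ∧ κ.2.2 < κ.2.1 := by
  simp only [KBC, Finset.mem_filter, Finset.mem_product, Finset.mem_range]
  have lt_sup (hb : κ.2.1 ∈ B) (hδ : κ.2.2 < κ.2.1) : κ.2.2 < B.sup id :=
    hδ.trans_le (Finset.le_sup (f := id) hb)
  tauto

theorem sum_KBC {M : Type*} [AddCommMonoid M] (f : ℕ × ℕ × ℕ → M) :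
    ∑ κ ∈ KBC C B, f κ = ∑ b ∈ B, ∑ p ∈ C ×ˢ Finset.range b, f (p.1, b, p.2) := by
  rw [Finset.sum_sigma']
  refine Finset.sum_nbij' (fun κ => ⟨κ.2.1, κ.1, κ.2.2⟩) (fun q => (q.2.1, q.1, q.2.2))
    ?_ ?_ (fun _ _ => rfl) (fun _ _ => rfl) (fun _ _ => rfl)
  all_goals
    intro _ h
    simp only [mem_KBC, Finset.mem_sigma, Finset.mem_product, Finset.mem_range] at h ⊢
    tauto

theorem weight_nonneg (C B : Finset ℕ) (b : ℕ) : 0 ≤ weight C B b := by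
  unfold weight
  positivity

/-- The configurations of beacon period `b` that `L` discovers at some slot `≤ t`, encoded as pairs
`(c, δ)`. -/
noncomputable def discoveredBy (C : Finset ℕ) (L : Set (ℕ × ℕ)) (b t : ℕ) : Finset (ℕ × ℕ) :=
  {p ∈ C ×ˢ Finset.range b | ∃ t' ≤ t, DiscoveredAt L p.1 b p.2 t'}

theorem discSum_eq_sum_card_discoveredBy (C B : Finset ℕ) (L : Set (ℕ × ℕ)) (t : ℕ) :
    discSum C B L t = ∑ b ∈ B, (discoveredBy C L b t).card * weight C B b := by
  rw [discSum, Finset.sum_filter, sum_KBC]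
  refine Finset.sum_congr rfl fun b _ => ?_
  simp only [← Finset.sum_filter, Finset.sum_const, nsmul_eq_mul, discoveredBy]

theorem card_discoveredBy_le_mul_card (C : Finset ℕ) (L : Set (ℕ × ℕ)) (b t : ℕ) :
    (discoveredBy C L b t).card ≤ b * C.card := by
  calc (discoveredBy C L b t).card ≤ (C ×ˢ Finset.range b).card := Finset.card_filter_le _ _
    _ = b * C.card := by rw [Finset.card_product, Finset.card_range, mul_comm]

theorem IsSchedule.card_discoveredBy_le_succ (hL : IsSchedule C L) (b t : ℕ) :
    (discoveredBy C L b t).card ≤ t + 1 := by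
  have discovered {p : ℕ × ℕ} (hp : p ∈ discoveredBy C L b t) :
      ∃ t' ≤ t, DiscoveredAt L p.1 b p.2 t' := (Finset.mem_filter.mp hp).2
  have exists_slot {p : ℕ × ℕ} (hp : p ∈ discoveredBy C L b t) :
      ∃ t', DiscoveredAt L p.1 b p.2 t' := (discovered hp).imp fun _ => And.right
  rw [← Finset.card_range (t + 1)]
  refine Finset.card_le_card_of_injOn (fun p => discTime L p.1 b p.2) (fun p hp => ?_)
    ((hL.injOn_discTime b).mono fun p hp => exists_slot hp)
  simpa [Nat.lt_succ_iff] using (exists_le_discoveredAt_iff (exists_slot hp)).mp (discovered hp)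

theorem Complete.exists_discoveredAt (h : Complete C B L) (hb : b ∈ B) {p : ℕ × ℕ}
    (hp : p ∈ C ×ˢ Finset.range b) : ∃ t, DiscoveredAt L p.1 b p.2 t :=
  have ⟨hc, hδ⟩ := Finset.mem_product.mp hp
  h _ hc _ hb _ (Finset.mem_range.mp hδ)

theorem Complete.injOn_discTime (h : Complete C B L) (hL : IsSchedule C L) (hb : b ∈ B) :
    Set.InjOn (fun p : ℕ × ℕ => discTime L p.1 b p.2) (C ×ˢ Finset.range b : Finset (ℕ × ℕ)) :=
  (hL.injOn_discTime b).mono fun _ => h.exists_discoveredAt hb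

theorem Recursive.discTime_lt (h : Recursive C B L) (hc : c ∈ C) (hb : b ∈ B) (hδ : δ < b) :
    discTime L c b δ < b * C.card :=
  (h.2 c hc b hb δ hδ).trans_lt <|
    Nat.sub_one_lt (Nat.mul_pos (Nat.zero_lt_of_lt hδ) (Finset.card_pos.mpr ⟨c, hc⟩)).ne'

theorem Recursive.image_discTime (h : Recursive C B L) (hL : IsSchedule C L) (hb : b ∈ B) :
    (C ×ˢ Finset.range b).image (fun p => discTime L p.1 b p.2) =
      Finset.range (b * C.card) := by
  refine Finset.eq_of_subset_of_card_le (Finset.image_subset_iff.mpr fun p hp => ?_) ?_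
  · have ⟨hc, hδ⟩ := Finset.mem_product.mp hp
    exact Finset.mem_range.mpr (h.discTime_lt hc hb (Finset.mem_range.mp hδ))
  · rw [Finset.card_image_of_injOn (h.1.injOn_discTime hL hb), Finset.card_product,
      Finset.card_range, Finset.card_range, mul_comm]

theorem Recursive.card_discoveredBy (h : Recursive C B L) (hL : IsSchedule C L) (hb : b ∈ B)
    (t : ℕ) : (discoveredBy C L b t).card = min (t + 1) (b * C.card) := by
  have discoveredBy_eq :
      discoveredBy C L b t = {p ∈ C ×ˢ Finset.range b | discTime L p.1 b p.2 ≤ t} :=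
    Finset.filter_congr fun p hp => exists_le_discoveredAt_iff (h.1.exists_discoveredAt hb hp)
  have range_filter_le :
      {s ∈ Finset.range (b * C.card) | s ≤ t} = Finset.range (min (t + 1) (b * C.card)) := by
    ext s
    simp only [Finset.mem_filter, Finset.mem_range]
    omega
  rw [discoveredBy_eq, ← Finset.card_image_of_injOn
      ((h.1.injOn_discTime hL hb).mono (Finset.coe_subset.mpr (Finset.filter_subset _ _))),
    ← Finset.filter_image (p := (· ≤ t)), h.image_discTime hL hb, range_filter_le,
    Finset.card_range]

theorem Recursive.discSum_le_discSum (h : Recursive C B L) (hL : IsSchedule C L)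
    (hL' : IsSchedule C L') (t : ℕ) : discSum C B L' t ≤ discSum C B L t := by
  simp only [discSum_eq_sum_card_discoveredBy]
  refine Finset.sum_le_sum fun b hb =>
    mul_le_mul_of_nonneg_right (Nat.cast_le.mpr ?_) (weight_nonneg C B b)
  rw [h.card_discoveredBy hL hb]
  exact le_min (hL'.card_discoveredBy_le_succ b t) (card_discoveredBy_le_mul_card C L' b t)

theorem Complete.discSum_eq_sum_discTime_le (h : Complete C B L) (t : ℕ) :
    discSum C B L t =
      ∑ κ ∈ KBC C B with discTime L κ.1 κ.2.1 κ.2.2 ≤ t, weight C B κ.2.1 := by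
  refine Finset.sum_congr (Finset.filter_congr fun κ hκ => ?_) fun _ _ => rfl
  obtain ⟨hc, hb, hδ⟩ := mem_KBC.mp hκ
  exact exists_le_discoveredAt_iff (h _ hc _ hb _ hδ)

theorem Complete.MDT_le_MDT_of_discSum_le (h : Complete C B L) (h' : Complete C B L')
    (hle : ∀ t, discSum C B L' t ≤ discSum C B L t) : MDT C B L ≤ MDT C B L' :=
  sum_mul_natCast_le_of_sum_filter_le fun t => by
    simpa only [h.discSum_eq_sum_discTime_le, h'.discSum_eq_sum_discTime_le] using hle t

end Schedules

/-- a recursive schedule is NDoT-optimal (it pointwise maximizes the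
weighted number of discoveries until every slot `t`) and consequently MDT-optimal. -/
theorem stmt3 (C B : Finset ℕ) (hC : C.Nonempty) (hB : B.Nonempty)
    (hBpos : ∀ b ∈ B, 0 < b)
    (L : Set (ℕ × ℕ)) (hL : IsSchedule C L) (hrec : Recursive C B L) :
    (∀ L' : Set (ℕ × ℕ), IsSchedule C L' →
      ∀ t : ℕ, discSum C B L' t ≤ discSum C B L t) ∧
    (∀ L' : Set (ℕ × ℕ), IsSchedule C L' → Complete C B L' →
      MDT C B L ≤ MDT C B L') := by
  have ndot_optimal (L' : Set (ℕ × ℕ)) (hL' : IsSchedule C L') (t : ℕ) :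
      discSum C B L' t ≤ discSum C B L t :=
    hrec.discSum_le_discSum hL hL' t
  exact ⟨ndot_optimal, fun L' hL' hcomplete' =>
    hrec.1.MDT_le_MDT_of_discSum_le hcomplete' (ndot_optimal L' hL')⟩
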